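/- Let S be a profinite semigroup topologically generated by a finite subset. Then S has only finitely many regular J-classes if and only if there exists a locally finite pseudovariety V such that S is a pro-(LG ⓜ V) semigroup. -/

import Mathlib

/-- A bundled finite semigroup. -/
structure FinSgp : Type 1 where
  carrier : Type
  [str : Semigroup carrier]
  [fin : Finite carrier]

attribute [instance] FinSgp.str FinSgp.fin

/-- Finite semigroups carry the discrete topology. -/
instance (T : FinSgp) : TopologicalSpace T.carrier := ⊥

instance (T : FinSgp) : DiscreteTopology T.carrier := ⟨rfl⟩

/-- A pseudovariety of finite semigroups: a class of finite semigroups closed under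
homomorphic images, (isomorphic copies of) subsemigroups, and binary direct products. -/
def IsPseudovariety (V : Set FinSgp) : Prop :=
  (∀ S ∈ V, ∀ (T : FinSgp) (f : S.carrier →ₙ* T.carrier), Function.Surjective f → T ∈ V) ∧
  (∀ S ∈ V, ∀ (T : FinSgp) (f : T.carrier →ₙ* S.carrier), Function.Injective f → T ∈ V) ∧
  (∀ S ∈ V, ∀ T ∈ V, (FinSgp.mk (S.carrier × T.carrier)) ∈ V)

/-- A profinite semigroup: a compact, Hausdorff, totally disconnected topological semigroup. -/
def IsProfiniteSgp (S : Type) [Semigroup S] [TopologicalSpace S] : Prop :=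
  ContinuousMul S ∧ CompactSpace S ∧ T2Space S ∧ TotallyDisconnectedSpace S

/-- A pro-V semigroup: a profinite semigroup whose points are separated by continuous
homomorphisms onto finite semigroups belonging to V. -/
def IsProV (V : Set FinSgp) (S : Type) [Semigroup S] [TopologicalSpace S] : Prop :=
  IsProfiniteSgp S ∧ ∀ x y : S, x ≠ y →
    ∃ (T : FinSgp) (f : S →ₙ* T.carrier),
      T ∈ V ∧ Continuous f ∧ Function.Surjective f ∧ f x ≠ f y

/-- `A` topologically generates the topological semigroup `S`. -/
def TopGen (S : Type) [Semigroup S] [TopologicalSpace S] (A : Set S) : Prop :=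
  closure ((Subsemigroup.closure A : Subsemigroup S) : Set S) = Set.univ

/-- A topological semigroup is locally countable if every closed subsemigroup
topologically generated by a finite subset is countable. -/
def IsLocCountable (S : Type) [Semigroup S] [TopologicalSpace S] : Prop :=
  ∀ A : Set S, A.Finite →
    (closure ((Subsemigroup.closure A : Subsemigroup S) : Set S)).Countable

/-- A pseudovariety is locally countable if every pro-V semigroup is locally countable. -/
def PVLocallyCountable (V : Set FinSgp) : Prop :=
  ∀ (S : Type) [Semigroup S] [TopologicalSpace S], IsProV V S → IsLocCountable S

/-- A pseudovariety is locally finite if every finitely generated pro-V semigroup is finite. -/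
def PVLocallyFinite (V : Set FinSgp) : Prop :=
  ∀ (S : Type) [Semigroup S] [TopologicalSpace S], IsProV V S →
    (∃ A : Set S, A.Finite ∧ TopGen S A) → Finite S

/-- The join of two pseudovarieties: the smallest pseudovariety containing both. -/
def PVJoin (V W : Set FinSgp) : Set FinSgp :=
  ⋂₀ {U | IsPseudovariety U ∧ V ⊆ U ∧ W ⊆ U}

/-- The preimage of an idempotent under a semigroup homomorphism, as a subsemigroup. -/
def idemFiber {S T : Type} [Semigroup S] [Semigroup T] (f : S →ₙ* T)
    (e : T) (he : e * e = e) : Subsemigroup S where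
  carrier := f ⁻¹' {e}
  mul_mem' := fun {a b} ha hb => by
    simp only [Set.mem_preimage, Set.mem_singleton_iff] at ha hb ⊢
    rw [map_mul, ha, hb, he]

/-- A subsemigroup of a finite semigroup, as a bundled finite semigroup. -/
def subFinSgp {S : Type} [Semigroup S] [Finite S] (T : Subsemigroup S) : FinSgp :=
  FinSgp.mk T

/-- The generators of the Mal'cev product `V ⓜ W`: finite semigroups `S` admitting a
homomorphism onto some `T ∈ W` whose fibers over idempotents lie in `V`. -/
def MalcevWitness (V W : Set FinSgp) (S : FinSgp) : Prop :=
  ∃ (T : FinSgp) (f : S.carrier →ₙ* T.carrier), T ∈ W ∧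
    ∀ (e : T.carrier) (he : e * e = e), subFinSgp (idemFiber f e he) ∈ V

/-- The Mal'cev product of two pseudovarieties: the smallest pseudovariety containing
all its generators. -/
def Malcev (V W : Set FinSgp) : Set FinSgp :=
  ⋂₀ {U | IsPseudovariety U ∧ ∀ S : FinSgp, MalcevWitness V W S → S ∈ U}

/-- Green's preorder `≤_L`. -/
def lLE {S : Type} [Semigroup S] (u v : S) : Prop := u = v ∨ ∃ x, u = x * v

/-- Green's relation `L`. -/
def GreenL {S : Type} [Semigroup S] (u v : S) : Prop := lLE u v ∧ lLE v u

/-- Green's preorder `≤_J`. -/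
def jLE {S : Type} [Semigroup S] (u v : S) : Prop :=
  u = v ∨ (∃ x, u = v * x) ∨ (∃ x, u = x * v) ∨ (∃ x y, u = x * v * y)

/-- Green's relation `J`. -/
def GreenJ {S : Type} [Semigroup S] (u v : S) : Prop := jLE u v ∧ jLE v u

/-- A regular element of a semigroup. -/
def IsRegularElt {S : Type} [Semigroup S] (s : S) : Prop := ∃ t, s = s * t * s

/-- `S` has only finitely many regular `J`-classes. -/
def FinManyRegJ (S : Type) [Semigroup S] : Prop :=
  ∃ F : Set S, F.Finite ∧ ∀ s : S, IsRegularElt s → ∃ t ∈ F, GreenJ s t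

/-- A subgroup of a semigroup: a subsemigroup which is a group under the induced
multiplication. -/
def IsSgpSubgroup (S : Type) [Semigroup S] (G : Set S) : Prop :=
  (∀ x ∈ G, ∀ y ∈ G, x * y ∈ G) ∧
  ∃ e ∈ G, (∀ x ∈ G, e * x = x ∧ x * e = x) ∧ (∀ x ∈ G, ∃ y ∈ G, x * y = e ∧ y * x = e)

/-- A group element of a semigroup: an element lying in some subgroup. -/
def IsGroupElt (S : Type) [Semigroup S] (s : S) : Prop :=
  ∃ G : Set S, IsSgpSubgroup S G ∧ s ∈ G

/-- `prodFrom f n` is the product `f 0 * f 1 * ⋯ * f n`. -/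
def prodFrom {S : Type} [Semigroup S] (f : ℕ → S) : ℕ → S
  | 0 => f 0
  | n + 1 => prodFrom f n * f (n + 1)

/-- A semigroup is nilpotent if it has a zero element and some length bound beyond
which all products equal zero. -/
def IsNilpotentSgp (S : Type) [Semigroup S] : Prop :=
  ∃ z : S, (∀ x : S, z * x = z ∧ x * z = z) ∧ ∃ n : ℕ, ∀ f : ℕ → S, prodFrom f n = z

/-- The pseudovariety `N` of finite nilpotent semigroups. -/
def NPv : Set FinSgp := {S | IsNilpotentSgp S.carrier}

/-- A semigroup which is a group. -/
def IsGroupSgp (S : Type) [Semigroup S] : Prop :=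
  ∃ e : S, (∀ x : S, e * x = x ∧ x * e = x) ∧ ∀ x : S, ∃ y : S, x * y = e ∧ y * x = e

/-- The pseudovariety `LG` of finite local groups: `eSe` is a group for each idempotent `e`. -/
def LG : Set FinSgp :=
  {S | ∀ e : S.carrier, e * e = e → ∀ s : S.carrier,
      ∃ t : S.carrier, (e * s * e) * (e * t * e) = e ∧ (e * t * e) * (e * s * e) = e}

/-- The pseudovariety `IE` of finite semigroups with exactly one idempotent. -/
def IE : Set FinSgp := {S | ∃! e : S.carrier, e * e = e}

/-- A bundled topological semigroup (carrier, multiplication, topology). -/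
structure TopSgp : Type 1 where
  carrier : Type
  [str : Semigroup carrier]
  [top : TopologicalSpace carrier]

attribute [instance] TopSgp.str TopSgp.top

/-- The fiber of a relational morphism over an idempotent, as a subsemigroup of the
domain. -/
def relFiber {S T : Type} [Semigroup S] [Semigroup T] (μ : Subsemigroup (S × T))
    (e : T) (he : e * e = e) : Subsemigroup S where
  carrier := {s | (s, e) ∈ μ}
  mul_mem' := fun {a b} ha hb => by
    have h := μ.mul_mem ha hb
    simpa [Prod.mk_mul_mk, he] using h

/-- `spow x n = x ^ (n + 1)` in a semigroup. -/
def spow {S : Type} [Semigroup S] (x : S) : ℕ → S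
  | 0 => x
  | n + 1 => spow x n * x

/-- The pseudovariety `A ∩ ESl` of finite aperiodic semigroups with commuting idempotents. -/
def AESl : Set FinSgp :=
  {S | (∃ n : ℕ, ∀ x : S.carrier, spow x (n + 1) = spow x n) ∧
       (∀ e f : S.carrier, e * e = e → f * f = f → e * f = f * e)}


/-! ### Idempotents in compact and in finite semigroups -/

theorem exists_idempotent_mem_of_finite {M : Type} [Semigroup M] [Finite M] (s : Set M)
    (hne : s.Nonempty) (hmul : ∀ x ∈ s, ∀ y ∈ s, x * y ∈ s) : ∃ m ∈ s, m * m = m := by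
  let : TopologicalSpace M := ⊥
  have : DiscreteTopology M := ⟨rfl⟩
  exact exists_idempotent_in_compact_subsemigroup (fun _ => continuous_of_discreteTopology) s hne
    s.toFinite.isCompact hmul

theorem exists_idempotent_mem_of_isClosed {S : Type} [Semigroup S] [TopologicalSpace S]
    [ContinuousMul S] [CompactSpace S] [T2Space S] (s : Set S) (hne : s.Nonempty)
    (hs : IsClosed s) (hmul : ∀ x ∈ s, ∀ y ∈ s, x * y ∈ s) : ∃ m ∈ s, m * m = m :=
  exists_idempotent_in_compact_subsemigroup (fun r => continuous_mul_const r) s hne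
    hs.isCompact hmul

/-- Stability of compact semigroups, for comparable idempotents: `h ≤ f` and `f ≤_J h`
imply `h = f`. -/
theorem idempotent_eq_of_jLE {S : Type} [Semigroup S] [TopologicalSpace S]
    [ContinuousMul S] [CompactSpace S] [T2Space S] {f h : S} (hf : f * f = f) (hh : h * h = h)
    (hle : h = f * h * f) (hJ : jLE f h) : h = f := by
  have hhf : h * f = h := by
    calc h * f = f * h * f * f := by rw [← hle]
      _ = f * h * f := by rw [mul_assoc, hf]
      _ = h := hle.symm
  have hfh : f * h = h := by
    calc f * h = f * (f * h * f) := by rw [← hle]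
      _ = f * f * h * f := by simp only [mul_assoc]
      _ = h := by rw [hf, ← hle]
  rcases hJ with h1 | ⟨x, h1⟩ | ⟨x, h1⟩ | ⟨x, y, h1⟩
  · exact h1.symm
  · have : h * f = f := by
      calc h * f = h * (h * x) := by rw [← h1]
        _ = h * x := by rw [← mul_assoc, hh]
        _ = f := h1.symm
    rw [← hhf, this]
  · have : f * h = f := by
      calc f * h = x * h * h := by rw [← h1]
        _ = x * h := by rw [mul_assoc, hh]
        _ = f := h1.symm
    rw [← hfh, this]
  · have hclosed : IsClosed {z : S | z * h = z ∧ ∃ v, z * v = f} := by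
      have e : {z : S | z * h = z ∧ ∃ v, z * v = f} =
          {z : S | z * h = z} ∩ Prod.snd '' {p : S × S | p.2 * p.1 = f} := by
        ext z
        simp
      rw [e]
      refine (isClosed_eq (by fun_prop) (by fun_prop)).inter
        (isClosedMap_snd_of_compactSpace _ (isClosed_eq (by fun_prop) (by fun_prop)))
    obtain ⟨z, ⟨hz, v, hv⟩, hzz⟩ := exists_idempotent_mem_of_isClosed
      {z : S | z * h = z ∧ ∃ v, z * v = f}
      ⟨x * h, by rw [mul_assoc, hh], y, h1.symm⟩ hclosed (by
        rintro a ⟨ha, v, hv⟩ b ⟨hb, w, hw⟩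
        refine ⟨by rw [mul_assoc, hb], w * v, ?_⟩
        have haf : a * f = a := by rw [← ha, mul_assoc, hhf]
        calc a * b * (w * v) = a * (b * w) * v := by simp only [mul_assoc]
          _ = f := by rw [hw, haf, hv])
    have hzf : z * f = z := by rw [← hz, mul_assoc, hhf]
    have : z = f := by
      calc z = z * f := hzf.symm
        _ = z * z * v := by rw [← hv, mul_assoc]
        _ = f := by rw [hzz, hv]
    rw [← hfh, ← this, hz]

theorem jLE.trans {S : Type} [Semigroup S] {a b c : S} (h1 : jLE a b) (h2 : jLE b c) :
    jLE a c := by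
  rcases h1 with rfl | ⟨x, rfl⟩ | ⟨x, rfl⟩ | ⟨x, y, rfl⟩
  · exact h2
  all_goals rcases h2 with rfl | ⟨u, rfl⟩ | ⟨u, rfl⟩ | ⟨u, v, rfl⟩
  · exact Or.inr (Or.inl ⟨x, rfl⟩)
  · exact Or.inr (Or.inl ⟨u * x, by simp only [mul_assoc]⟩)
  · exact Or.inr (Or.inr (Or.inr ⟨u, x, rfl⟩))
  · exact Or.inr (Or.inr (Or.inr ⟨u, v * x, by simp only [mul_assoc]⟩))
  · exact Or.inr (Or.inr (Or.inl ⟨x, rfl⟩))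
  · exact Or.inr (Or.inr (Or.inr ⟨x, u, by simp only [mul_assoc]⟩))
  · exact Or.inr (Or.inr (Or.inl ⟨x * u, by simp only [mul_assoc]⟩))
  · exact Or.inr (Or.inr (Or.inr ⟨x * u, v, by simp only [mul_assoc]⟩))
  · exact Or.inr (Or.inr (Or.inr ⟨x, y, rfl⟩))
  · exact Or.inr (Or.inr (Or.inr ⟨x, u * y, by simp only [mul_assoc]⟩))
  · exact Or.inr (Or.inr (Or.inr ⟨x * u, y, by simp only [mul_assoc]⟩))
  · exact Or.inr (Or.inr (Or.inr ⟨x * u, v * y, by simp only [mul_assoc]⟩))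

theorem exists_idempotent_greenJ {S : Type} [Semigroup S] {s : S} (hs : IsRegularElt s) :
    ∃ e : S, e * e = e ∧ GreenJ s e := by
  obtain ⟨t, ht⟩ := hs
  refine ⟨s * t, ?_, Or.inr (Or.inl ⟨s, ht⟩), Or.inr (Or.inl ⟨t, rfl⟩)⟩
  rw [← mul_assoc, ← ht]

theorem isRegularElt_of_idempotent {S : Type} [Semigroup S] {e : S} (he : e * e = e) :
    IsRegularElt e := ⟨e, by rw [he, he]⟩

theorem isClosed_setOf_jLE {S : Type} [Semigroup S] [TopologicalSpace S]
    [ContinuousMul S] [CompactSpace S] [T2Space S] (t : S) : IsClosed {z : S | jLE z t} := by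
  have e : {z : S | jLE z t} = {t} ∪ (Set.range (fun x => t * x) ∪ (Set.range (fun x => x * t) ∪
      Set.range (fun p : S × S => p.1 * t * p.2))) := by
    ext z
    simp [jLE, eq_comm]
  rw [e]
  exact isClosed_singleton.union ((isCompact_range (by fun_prop)).isClosed.union
    ((isCompact_range (by fun_prop)).isClosed.union (isCompact_range (by fun_prop)).isClosed))

/-- A finite semigroup is a local group iff its idempotents are pairwise incomparable. -/
theorem mem_LG_iff (T : FinSgp) :
    T ∈ LG ↔ ∀ a b : T.carrier, a * a = a → b * b = b → b = a * b * a → b = a := by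
  constructor
  · intro h a b ha hb hab
    obtain ⟨t, ht, -⟩ := h a ha b
    rw [← hab] at ht
    calc b = b * a := by
          conv_lhs => rw [hab]
          conv_rhs => rw [hab]
          rw [mul_assoc (a * b) a a, ha]
      _ = b * (b * (a * t * a)) := by rw [ht]
      _ = b * (a * t * a) := by rw [← mul_assoc, hb]
      _ = a := ht
  · intro h e he s
    have key : ∀ x : T.carrier, e * x = x → x * e = x →
        ∃ m, e * m = m ∧ m * e = m ∧ x * m = e := by
      intro x hx hx'
      obtain ⟨z, ⟨m, hm, hm', hz⟩, hzz⟩ := exists_idempotent_mem_of_finite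
        {z : T.carrier | ∃ m, e * m = m ∧ m * e = m ∧ x * m = z}
        ⟨x * e, e, he, he, rfl⟩ (by
          rintro _ ⟨m, hm, hm', rfl⟩ _ ⟨n, hn, hn', rfl⟩
          exact ⟨m * (x * n), by rw [← mul_assoc, hm], by simp only [mul_assoc, hn'],
            by simp only [mul_assoc]⟩)
      refine ⟨m, hm, hm', hz.trans (h e z he hzz ?_)⟩
      rw [← hz, ← mul_assoc, hx, mul_assoc, hm']
    obtain ⟨m, hm, hm', hxm⟩ := key (e * s * e) (by simp only [← mul_assoc, he])
      (by simp only [mul_assoc, he])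
    obtain ⟨n, hn, hn', hmn⟩ := key m hm hm'
    have hnx : n = e * s * e := by
      calc n = e * s * e * m * n := by rw [hxm, hn]
        _ = e * s * (e * (m * n)) := by simp only [mul_assoc]
        _ = e * s * e := by rw [hmn, he]
    refine ⟨m, ?_, ?_⟩
    · rw [hm, hm', hxm]
    · rw [hm, hm', ← hnx, hmn]

/-! ### Open congruences on compact semigroups -/

section OpenCon

variable {S : Type} [Semigroup S] [TopologicalSpace S]

/-- A congruence with open classes. -/
def IsOpenCon (c : Con S) : Prop := ∀ s : S, IsOpen {t | c s t}

theorem IsOpenCon.finite_quotient [CompactSpace S] {c : Con S} (hc : IsOpenCon c) :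
    Finite c.Quotient := by
  obtain ⟨t, ht⟩ := isCompact_univ.elim_finite_subcover (fun s : S => {t | c s t}) hc
    (fun s _ => Set.mem_iUnion.2 ⟨s, c.refl s⟩)
  refine Set.finite_univ_iff.1 ((t.finite_toSet.image (fun s : S => (s : c.Quotient))).subset ?_)
  rintro ⟨x⟩ -
  obtain ⟨s, hs, hx⟩ := Set.mem_iUnion₂.1 (ht (Set.mem_univ x))
  exact ⟨s, hs, (Con.eq c).2 hx⟩

/-- The finite quotient by an open congruence on a compact semigroup. -/
def IsOpenCon.quotient [CompactSpace S] {c : Con S} (hc : IsOpenCon c) : FinSgp :=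
  haveI := hc.finite_quotient
  FinSgp.mk c.Quotient

/-- The projection onto the finite quotient by an open congruence. -/
def IsOpenCon.mk [CompactSpace S] {c : Con S} (hc : IsOpenCon c) : S →ₙ* hc.quotient.carrier where
  toFun s := (s : c.Quotient)
  map_mul' _ _ := rfl

theorem IsOpenCon.mk_surjective [CompactSpace S] {c : Con S} (hc : IsOpenCon c) :
    Function.Surjective hc.mk := by
  rintro ⟨x⟩
  exact ⟨x, rfl⟩

theorem IsOpenCon.mk_eq_iff [CompactSpace S] {c : Con S} (hc : IsOpenCon c) {x y : S} :
    hc.mk x = hc.mk y ↔ c x y := Con.eq c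

theorem IsOpenCon.continuous_mk [CompactSpace S] {c : Con S} (hc : IsOpenCon c) :
    Continuous hc.mk := by
  refine continuous_discrete_rng.2 fun b => ?_
  obtain ⟨s, rfl⟩ := hc.mk_surjective b
  convert hc s using 1
  ext t
  exact eq_comm.trans hc.mk_eq_iff

/-- The projection between finite quotients by comparable open congruences. -/
def IsOpenCon.map [CompactSpace S] {c d : Con S} (hc : IsOpenCon c) (hd : IsOpenCon d)
    (h : c ≤ d) : hc.quotient.carrier →ₙ* hd.quotient.carrier where
  toFun := Quotient.map' id fun _ _ hxy => h hxy
  map_mul' := by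
    rintro ⟨x⟩ ⟨y⟩
    rfl

theorem IsOpenCon.inf {c d : Con S} (hc : IsOpenCon c) (hd : IsOpenCon d) :
    IsOpenCon (c ⊓ d) := fun s => by
  have : {t | (c ⊓ d) s t} = {t | c s t} ∩ {t | d s t} := by
    ext t
    exact Con.inf_iff_and
  rw [this]
  exact (hc s).inter (hd s)

theorem IsOpenCon.iInf {ι : Type} [Finite ι] {c : ι → Con S} (hc : ∀ i, IsOpenCon (c i)) :
    IsOpenCon (⨅ i, c i) := fun s => by
  have : {t | (⨅ i, c i) s t} = ⋂ i, {t | c i s t} := by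
    ext t
    simp [Con.coe_iInf]
  rw [this]
  exact isOpen_iInter_of_finite fun i => hc i s

/-- The syntactic congruence of a subset of a semigroup. -/
def syntacticCon {S : Type} [Semigroup S] (K : Set S) : Con S where
  r a b := (a ∈ K ↔ b ∈ K) ∧ (∀ u, u * a ∈ K ↔ u * b ∈ K) ∧ (∀ v, a * v ∈ K ↔ b * v ∈ K) ∧
    ∀ p : S × S, p.1 * a * p.2 ∈ K ↔ p.1 * b * p.2 ∈ K
  iseqv :=
    { refl := fun _ => ⟨Iff.rfl, fun _ => Iff.rfl, fun _ => Iff.rfl, fun _ => Iff.rfl⟩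
      symm := fun h => ⟨h.1.symm, fun u => (h.2.1 u).symm, fun v => (h.2.2.1 v).symm,
        fun p => (h.2.2.2 p).symm⟩
      trans := fun h h' => ⟨h.1.trans h'.1, fun u => (h.2.1 u).trans (h'.2.1 u),
        fun v => (h.2.2.1 v).trans (h'.2.2.1 v), fun p => (h.2.2.2 p).trans (h'.2.2.2 p)⟩ }
  mul' := by
    intro a b c d h h'
    refine ⟨(h.2.2.1 c).trans (h'.2.1 b), fun u => ?_, fun v => ?_, fun p => ?_⟩
    · have h1 := h.2.2.2 (u, c)
      have h2 := h'.2.1 (u * b)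
      simp only [mul_assoc] at h1 h2 ⊢
      exact h1.trans h2
    · have h1 := h.2.2.1 (c * v)
      have h2 := h'.2.2.2 (b, v)
      simp only [mul_assoc] at h1 h2 ⊢
      exact h1.trans h2
    · have h1 := h.2.2.2 (p.1, c * p.2)
      have h2 := h'.2.2.2 (p.1 * b, p.2)
      simp only [mul_assoc] at h1 h2 ⊢
      exact h1.trans h2

theorem isOpen_setOf_forall_mem_iff {X Y Z : Type} [TopologicalSpace X] [TopologicalSpace Y]
    [TopologicalSpace Z] [CompactSpace X] {g : X → Y → Z}
    (hg : Continuous fun p : X × Y => g p.1 p.2) {K : Set Z}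
    (hK : IsClopen K) (s : Y) : IsOpen {t | ∀ x, g x s ∈ K ↔ g x t ∈ K} := by
  have hg' : Continuous fun p : X × Y => g p.1 s := hg.comp (continuous_fst.prodMk continuous_const)
  have e : {t | ∀ x, g x s ∈ K ↔ g x t ∈ K}ᶜ = Prod.snd ''
      ((((fun p : X × Y => g p.1 s) ⁻¹' K) ∩ ((fun p : X × Y => g p.1 p.2) ⁻¹' K)ᶜ) ∪
      (((fun p : X × Y => g p.1 s) ⁻¹' K)ᶜ ∩ ((fun p : X × Y => g p.1 p.2) ⁻¹' K))) := by
    ext t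
    simp only [Set.mem_compl_iff, Set.mem_ofPred_eq, not_forall, Set.mem_image, Set.mem_union,
      Set.mem_inter_iff, Set.mem_preimage, Prod.exists, exists_eq_right]
    exact exists_congr fun x => by tauto
  rw [← isClosed_compl_iff, e]
  exact isClosedMap_snd_of_compactSpace _
    (((hK.preimage hg').inter (hK.preimage hg).compl).union
      ((hK.preimage hg').compl.inter (hK.preimage hg))).isClosed

theorem isOpenCon_syntacticCon [ContinuousMul S] [CompactSpace S] {K : Set S} (hK : IsClopen K) :
    IsOpenCon (syntacticCon K) := fun s => by
  have h0 : IsOpen {t | s ∈ K ↔ t ∈ K} := by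
    simpa using isOpen_setOf_forall_mem_iff (X := Unit) (g := fun _ t => t) (by fun_prop) hK s
  exact h0.inter
    ((isOpen_setOf_forall_mem_iff (g := fun u t => u * t) (by fun_prop) hK s).inter
    ((isOpen_setOf_forall_mem_iff (g := fun v t => t * v) (by fun_prop) hK s).inter
    (isOpen_setOf_forall_mem_iff (g := fun (p : S × S) t => p.1 * t * p.2) (by fun_prop) hK s)))

/-- A point and a closed set not containing it are separated by an open congruence. -/
theorem exists_isOpenCon_of_notMem [ContinuousMul S] [CompactSpace S] [T2Space S]
    [TotallyDisconnectedSpace S] {x : S} {Z : Set S} (hZ : IsClosed Z) (hx : x ∉ Z) :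
    ∃ c : Con S, IsOpenCon c ∧ ∀ z ∈ Z, ¬ c x z := by
  obtain ⟨K, hK, hxK, hKZ⟩ := compact_exists_isClopen_in_isOpen hZ.isOpen_compl hx
  exact ⟨syntacticCon K, isOpenCon_syntacticCon hK, fun z hz h => hKZ (h.1.1 hxK) hz⟩

/-- If there are finitely many regular `J`-classes, some open congruence only identifies
`J`-equivalent idempotents. -/
theorem exists_isOpenCon_jLE [ContinuousMul S] [CompactSpace S] [T2Space S]
    [TotallyDisconnectedSpace S] (h : FinManyRegJ S) :
    ∃ c : Con S, IsOpenCon c ∧ ∀ e f : S, e * e = e → f * f = f → c e f → jLE e f := by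
  obtain ⟨F, hF, hreg⟩ := h
  have : Finite F := hF
  have hsep : ∀ p : F × F, ∃ c : Con S, IsOpenCon c ∧
      (¬ jLE p.1.1 p.2.1 → ∀ z, jLE z p.2.1 → ¬ c p.1.1 z) := fun p => by
    by_cases hp : jLE p.1.1 p.2.1
    · exact ⟨syntacticCon Set.univ, isOpenCon_syntacticCon isClopen_univ, fun h => (h hp).elim⟩
    · obtain ⟨c, hc, hcz⟩ := exists_isOpenCon_of_notMem (isClosed_setOf_jLE p.2.1) hp
      exact ⟨c, hc, fun _ => hcz⟩
  choose c hc hcz using hsep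
  refine ⟨⨅ p, c p, IsOpenCon.iInf hc, fun e f he hf hef => ?_⟩
  obtain ⟨s, hs, hes, hse⟩ := hreg e (isRegularElt_of_idempotent he)
  obtain ⟨t, ht, hft, htf⟩ := hreg f (isRegularElt_of_idempotent hf)
  by_contra hlt
  have hst : ¬ jLE s t := fun hst => hlt (hes.trans (hst.trans htf))
  obtain ⟨d, hcd, hdz⟩ : ∃ d : Con S, (⨅ p, c p) ≤ d ∧ ∀ z, jLE z t → ¬ d s z :=
    ⟨c (⟨s, hs⟩, ⟨t, ht⟩), iInf_le c _, hcz (⟨s, hs⟩, ⟨t, ht⟩) hst⟩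
  have hd : d e f := hcd hef
  rcases hse with rfl | ⟨x, rfl⟩ | ⟨x, rfl⟩ | ⟨x, y, rfl⟩
  · exact hdz f hft hd
  · exact hdz (f * x) (jLE.trans (Or.inr (Or.inl ⟨x, rfl⟩)) hft) (d.mul hd (d.refl x))
  · exact hdz (x * f) (jLE.trans (Or.inr (Or.inr (Or.inl ⟨x, rfl⟩))) hft) (d.mul (d.refl x) hd)
  · exact hdz (x * f * y) (jLE.trans (Or.inr (Or.inr (Or.inr ⟨x, y, rfl⟩))) hft)
      (d.mul (d.mul (d.refl x) hd) (d.refl y))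

end OpenCon

/-! ### The pseudovariety generated by a finite semigroup -/

/-- The finite semigroups satisfying all semigroup identities of `T`. -/
def identityClass (T : FinSgp) : Set FinSgp :=
  {U | ∀ (α : Type) (w w' : FreeSemigroup α),
    (∀ φ : FreeSemigroup α →ₙ* T.carrier, φ w = φ w') →
      ∀ φ : FreeSemigroup α →ₙ* U.carrier, φ w = φ w'}

theorem mem_identityClass_self (T : FinSgp) : T ∈ identityClass T := fun _ _ _ h => h

theorem exists_lift_of_surjective {α M N : Type} [Semigroup M] [Semigroup N] (f : M →ₙ* N)
    (hf : Function.Surjective f) (φ : FreeSemigroup α →ₙ* N) :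
    ∃ φ' : FreeSemigroup α →ₙ* M, f.comp φ' = φ := by
  refine ⟨FreeSemigroup.lift fun a => (hf (φ (FreeSemigroup.of a))).choose,
    FreeSemigroup.hom_ext ?_⟩
  ext a
  simp only [Function.comp_apply, MulHom.comp_apply, FreeSemigroup.lift_of]
  exact (hf (φ (FreeSemigroup.of a))).choose_spec

theorem isPseudovariety_identityClass (T : FinSgp) : IsPseudovariety (identityClass T) := by
  refine ⟨fun M hM N f hf α w w' h φ => ?_, fun M hM N f hf α w w' h φ => ?_,
    fun M hM N hN α w w' h φ => ?_⟩
  · obtain ⟨φ', rfl⟩ := exists_lift_of_surjective f hf φ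
    exact congrArg f (hM α w w' h φ')
  · exact hf (hM α w w' h (f.comp φ))
  · exact Prod.ext (hM α w w' h ((MulHom.fst _ _).comp φ)) (hN α w w' h ((MulHom.snd _ _).comp φ))

theorem closure_eq_srange_lift {S : Type} [Semigroup S] (A : Set S) :
    Subsemigroup.closure A = (FreeSemigroup.lift (Subtype.val : A → S)).srange := by
  apply le_antisymm
  · exact Subsemigroup.closure_le.2 fun a ha =>
      ⟨FreeSemigroup.of ⟨a, ha⟩, FreeSemigroup.lift_of _ _⟩
  · rintro _ ⟨w, rfl⟩
    induction w using FreeSemigroup.recOnMul with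
    | ih1 x =>
      rw [FreeSemigroup.lift_of]
      exact Subsemigroup.subset_closure x.2
    | ih2 x y hx hy =>
      rw [map_mul]
      exact mul_mem hx hy

theorem TopGen.denseRange_lift {S : Type} [Semigroup S] [TopologicalSpace S] {A : Set S}
    (h : TopGen S A) : DenseRange (FreeSemigroup.lift (Subtype.val : A → S)) := by
  rw [DenseRange, ← MulHom.coe_srange, ← closure_eq_srange_lift, dense_iff_closure_eq]
  exact h

theorem pvLocallyFinite_identityClass (T : FinSgp) : PVLocallyFinite (identityClass T) := by
  rintro R _ _ ⟨⟨_, _, _, _⟩, hsep⟩ ⟨A, hA, hgen⟩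
  have : Finite A := hA
  rcases isEmpty_or_nonempty R with _ | _
  · infer_instance
  let Θ : FreeSemigroup A → (A → T.carrier) → T.carrier := fun w g => FreeSemigroup.lift g w
  have hfac : Function.FactorsThrough (FreeSemigroup.lift (Subtype.val : A → R)) Θ := by
    intro w w' hw
    by_contra hne
    obtain ⟨U, f, hU, -, -, hf⟩ := hsep _ _ hne
    refine hf (hU A w w' (fun φ => ?_) (f.comp (FreeSemigroup.lift Subtype.val)))
    have := congrFun hw (FreeSemigroup.lift.symm φ)
    simpa only [Θ, Equiv.apply_symm_apply] using this
  obtain ⟨g, hg⟩ := (Function.factorsThrough_iff _).1 hfac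
  have hfin : (Set.range (FreeSemigroup.lift (Subtype.val : A → R))).Finite :=
    (Set.finite_range g).subset (by rw [hg]; exact Set.range_comp_subset_range _ _)
  have huniv := hgen.denseRange_lift.closure_range
  rw [hfin.isClosed.closure_eq] at huniv
  exact Set.finite_univ_iff.1 (huniv ▸ hfin)

/-- In a finite quotient of a profinite semigroup, idempotents lift under the projection. -/
theorem exists_idempotent_lift {S : Type} [Semigroup S] [TopologicalSpace S]
    [ContinuousMul S] [CompactSpace S] [T2Space S] {T : FinSgp} (q : S →ₙ* T.carrier)
    (hq : Continuous q) (hsurj : Function.Surjective q) {a : T.carrier} (ha : a * a = a) :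
    ∃ a' : S, a' * a' = a' ∧ q a' = a := by
  obtain ⟨m, hm, hmm⟩ := exists_idempotent_mem_of_isClosed (q ⁻¹' {a}) (hsurj a)
    ((isClosed_discrete {a}).preimage hq) (by
      rintro x hx y hy
      rw [Set.mem_preimage, Set.mem_singleton_iff] at *
      rw [map_mul, hx, hy, ha])
  exact ⟨m, hmm, hm⟩

/-- If an open congruence only identifies `J`-equivalent idempotents, then all finer finite
quotients are Mal'cev witnesses over its quotient. -/
theorem malcevWitness_of_jLE {S : Type} [Semigroup S] [TopologicalSpace S]
    [ContinuousMul S] [CompactSpace S] [T2Space S] {c d : Con S} (hc : IsOpenCon c)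
    (hd : IsOpenCon d) (hcd : c ≤ d)
    (h : ∀ e f : S, e * e = e → f * f = f → d e f → jLE e f) :
    MalcevWitness LG (identityClass hd.quotient) hc.quotient := by
  refine ⟨hd.quotient, hc.map hd hcd, mem_identityClass_self _, fun e he => ?_⟩
  rw [mem_LG_iff]
  rintro ⟨a, ha⟩ ⟨b, hb⟩ haa hbb hab
  replace haa : a * a = a := congrArg Subtype.val haa
  replace hbb : b * b = b := congrArg Subtype.val hbb
  replace hab : b = a * b * a := congrArg Subtype.val hab
  change hc.map hd hcd a = e at ha
  change hc.map hd hcd b = e at hb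
  refine Subtype.ext (show b = a from ?_)
  obtain ⟨a', ha', rfl⟩ := exists_idempotent_lift hc.mk hc.continuous_mk hc.mk_surjective haa
  obtain ⟨b0, hb0⟩ := hc.mk_surjective b
  obtain ⟨b', ⟨hb', hb''⟩, hbb'⟩ := exists_idempotent_mem_of_isClosed
    {z : S | hc.mk z = b ∧ a' * z * a' = z}
    ⟨a' * b0 * a', by rw [map_mul, map_mul, hb0, ← hab], by
      simp only [← mul_assoc, ha']
      rw [mul_assoc _ a' a', ha']⟩
    (((isClosed_discrete {b}).preimage hc.continuous_mk).inter
      (isClosed_eq (by fun_prop) continuous_id))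
    (by
      rintro x ⟨hx, hx'⟩ y ⟨hy, hy'⟩
      refine ⟨by rw [map_mul, hx, hy, hbb], ?_⟩
      have hax : a' * x = x := by rw [← hx']; simp only [← mul_assoc, ha']
      have hya : y * a' = y := by rw [← hy']; simp only [mul_assoc, ha']
      rw [← mul_assoc, hax, mul_assoc, hya])
  rw [← hb'] at hb ⊢
  have hdab : d a' b' := hd.mk_eq_iff.1 (ha.trans hb.symm)
  rw [idempotent_eq_of_jLE ha' hbb' hb''.symm (h a' b' ha' hbb' hdab)]

theorem exists_isProV_malcev_of_finManyRegJ {S : Type} [Semigroup S] [TopologicalSpace S]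
    (hS : IsProfiniteSgp S) (h : FinManyRegJ S) :
    ∃ V : Set FinSgp, IsPseudovariety V ∧ PVLocallyFinite V ∧ IsProV (Malcev LG V) S := by
  obtain ⟨_, _, _, _⟩ := id hS
  obtain ⟨d, hd, hJ⟩ := exists_isOpenCon_jLE h
  refine ⟨identityClass hd.quotient, isPseudovariety_identityClass _,
    pvLocallyFinite_identityClass _, hS, fun x y hxy => ?_⟩
  obtain ⟨c, hc, hcxy⟩ := exists_isOpenCon_of_notMem (isClosed_singleton (x := y)) hxy
  refine ⟨(hc.inf hd).quotient, (hc.inf hd).mk, ?_, (hc.inf hd).continuous_mk,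
    (hc.inf hd).mk_surjective, fun heq => ?_⟩
  · exact Set.mem_sInter.2 fun U hU => hU.2 _ (malcevWitness_of_jLE _ hd inf_le_right hJ)
  · exact hcxy y rfl (Con.inf_iff_and.1 ((hc.inf hd).mk_eq_iff.1 heq)).1

/-! ### Locally finite pseudovarieties have finite relatively free semigroups -/

section RelativelyFree

variable (V : Set FinSgp) (α : Type)

/-- The congruences on a free semigroup whose quotients are finite and lie in `V`. -/
def CofiniteCon : Type :=
  {c : Con (FreeSemigroup α) // ∃ h : Finite c.Quotient, @FinSgp.mk c.Quotient _ h ∈ V}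

variable {V α}

/-- The quotient by a congruence in `CofiniteCon`. -/
def CofiniteCon.quotient (i : CofiniteCon V α) : FinSgp :=
  @FinSgp.mk i.1.Quotient _ i.2.choose

/-- The projection onto the quotient by a congruence in `CofiniteCon`. -/
def CofiniteCon.mk (i : CofiniteCon V α) : FreeSemigroup α →ₙ* i.quotient.carrier where
  toFun w := (w : i.1.Quotient)
  map_mul' _ _ := rfl

theorem CofiniteCon.mk_surjective (i : CofiniteCon V α) : Function.Surjective i.mk := by
  rintro ⟨x⟩
  exact ⟨x, rfl⟩

theorem CofiniteCon.exists_ker (hV : IsPseudovariety V) {T : FinSgp} (hT : T ∈ V)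
    (φ : FreeSemigroup α →ₙ* T.carrier) :
    ∃ i : CofiniteCon V α, ∀ w w', i.mk w = i.mk w' → φ w = φ w' := by
  let f : (Con.ker φ).Quotient →ₙ* T.carrier :=
    { toFun := Quotient.lift φ fun _ _ h => h
      map_mul' := by
        rintro ⟨x⟩ ⟨y⟩
        exact map_mul φ x y }
  have hf : Function.Injective f := by
    rintro ⟨x⟩ ⟨y⟩ hxy
    exact Quotient.sound hxy
  have hfin : Finite (Con.ker φ).Quotient := Finite.of_injective f hf
  refine ⟨⟨Con.ker φ, hfin, hV.2.1 T hT (FinSgp.mk (Con.ker φ).Quotient) f hf⟩, fun w w' h => ?_⟩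
  exact (Con.eq (Con.ker φ)).1 h

theorem exists_finite_relativelyFree (hV : IsPseudovariety V) (hlf : PVLocallyFinite V)
    [Finite α] : ∃ (F : Type) (_ : Semigroup F) (_ : Finite F) (ψ : FreeSemigroup α →ₙ* F),
      ∀ T ∈ V, ∀ φ : FreeSemigroup α →ₙ* T.carrier, ∀ w w', ψ w = ψ w' → φ w = φ w' := by
  let ρ : FreeSemigroup α →ₙ* (∀ i : CofiniteCon V α, i.quotient.carrier) :=
    MulHom.pi fun i => i.mk
  let R := ρ.srange.topologicalClosure
  let ψ : FreeSemigroup α →ₙ* R :=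
    ρ.codRestrict R fun w => Subsemigroup.le_topologicalClosure _ ⟨w, rfl⟩
  have hdense : DenseRange ψ := fun x => by
    rw [closure_subtype, ← Set.range_comp]
    exact x.2
  have hcompact : CompactSpace R :=
    isCompact_iff_compactSpace.1 (Subsemigroup.isClosed_topologicalClosure _).isCompact
  have hpro : IsProV V R := by
    refine ⟨⟨inferInstance, hcompact, inferInstance, inferInstance⟩, fun x y hxy => ?_⟩
    obtain ⟨i, hi⟩ := Function.ne_iff.1 (Subtype.coe_injective.ne hxy)
    refine ⟨i.quotient, (Pi.evalMulHom _ i).comp (MulMemClass.subtype R), i.2.choose_spec,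
      (continuous_apply i).comp continuous_subtype_val, fun b => ?_, hi⟩
    obtain ⟨w, rfl⟩ := i.mk_surjective b
    exact ⟨ψ w, rfl⟩
  have hfinite : Finite R := by
    refine hlf R hpro ⟨Set.range (ψ ∘ FreeSemigroup.of), Set.finite_range _, ?_⟩
    refine Set.eq_univ_of_univ_subset (hdense.closure_range ▸ closure_mono ?_)
    rintro _ ⟨w, rfl⟩
    induction w using FreeSemigroup.recOnMul with
    | ih1 x => exact Subsemigroup.subset_closure ⟨x, rfl⟩
    | ih2 x y hx hy =>
      rw [map_mul]
      exact mul_mem hx hy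
  refine ⟨R, inferInstance, hfinite, ψ, fun T hT φ w w' h => ?_⟩
  obtain ⟨i, hi⟩ := CofiniteCon.exists_ker hV hT φ
  exact hi w w' (congrFun (congrArg Subtype.val h) i)

end RelativelyFree

/-! ### Mal'cev products with `LG` -/

/-- The finite semigroups `T` such that, for each homomorphism from the free semigroup to `T`,
the image of every fiber of `ψ` over an idempotent has pairwise incomparable idempotents. -/
def localGroupOver {α F : Type} [Semigroup F] (ψ : FreeSemigroup α →ₙ* F) : Set FinSgp :=
  {T | ∀ φ : FreeSemigroup α →ₙ* T.carrier, ∀ w u, ψ w * ψ w = ψ w → ψ u = ψ w →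
    φ w * φ w = φ w → φ u * φ u = φ u → φ u = φ w * φ u * φ w → φ u = φ w}

theorem isPseudovariety_localGroupOver {α F : Type} [Semigroup F] (ψ : FreeSemigroup α →ₙ* F) :
    IsPseudovariety (localGroupOver ψ) := by
  refine ⟨fun M hM N f hf φ w u hw hu hφw hφu hle => ?_,
    fun M hM N f hf φ w u hw hu hφw hφu hle => ?_,
    fun M hM N hN φ w u hw hu hφw hφu hle => ?_⟩
  · obtain ⟨φ, rfl⟩ := exists_lift_of_surjective f hf φ
    simp only [MulHom.comp_apply] at hφw hφu hle ⊢
    obtain ⟨_, ⟨w₁, hw₁, hfw₁, rfl⟩, hi⟩ := exists_idempotent_mem_of_finite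
      {y : M.carrier | ∃ v, ψ v = ψ w ∧ f (φ v) = f (φ w) ∧ φ v = y} ⟨_, w, rfl, rfl, rfl⟩ (by
        rintro _ ⟨v, hv, hfv, rfl⟩ _ ⟨v', hv', hfv', rfl⟩
        exact ⟨v * v', by rw [map_mul, hv, hv', hw], by rw [map_mul, map_mul, hfv, hfv', hφw],
          map_mul _ _ _⟩)
    have hsq : φ w₁ * (φ w₁ * φ u * φ w₁) * φ w₁ = φ w₁ * φ u * φ w₁ := by
      simp only [← mul_assoc, hi]
      rw [mul_assoc _ (φ w₁) (φ w₁), hi]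
    obtain ⟨_, ⟨u₁, hu₁, hfu₁, hle₁, rfl⟩, hj⟩ := exists_idempotent_mem_of_finite
      {y : M.carrier | ∃ v, ψ v = ψ w ∧ f (φ v) = f (φ u) ∧ φ w₁ * φ v * φ w₁ = φ v ∧ φ v = y}
      ⟨_, w₁ * u * w₁, by simp only [map_mul, hw₁, hu, hw],
        by simp only [map_mul, hfw₁, ← hle], by simpa only [map_mul] using hsq, rfl⟩ (by
        rintro _ ⟨v, hv, hfv, hlv, rfl⟩ _ ⟨v', hv', hfv', hlv', rfl⟩
        refine ⟨v * v', by rw [map_mul, hv, hv', hw], by rw [map_mul, map_mul, hfv, hfv', hφu],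
          ?_, map_mul _ _ _⟩
        have h1 : φ w₁ * φ v = φ v := by rw [← hlv]; simp only [← mul_assoc, hi]
        have h2 : φ v' * φ w₁ = φ v' := by rw [← hlv']; simp only [mul_assoc, hi]
        rw [map_mul, ← mul_assoc, h1, mul_assoc, h2])
    rw [← hfu₁, ← hfw₁, hM φ w₁ u₁ (by rw [hw₁, hw]) (by rw [hu₁, hw₁]) hi hj hle₁.symm]
  · refine hf (hM (f.comp φ) w u hw hu ?_ ?_ ?_)
    · exact (map_mul f _ _).symm.trans (congrArg f hφw)
    · exact (map_mul f _ _).symm.trans (congrArg f hφu)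
    · simp only [MulHom.comp_apply, ← map_mul]
      exact congrArg f (by simpa only [map_mul] using hle)
  · exact Prod.ext
      (hM ((MulHom.fst _ _).comp φ) w u hw hu (congrArg Prod.fst hφw) (congrArg Prod.fst hφu)
        (congrArg Prod.fst hle))
      (hN ((MulHom.snd _ _).comp φ) w u hw hu (congrArg Prod.snd hφw) (congrArg Prod.snd hφu)
        (congrArg Prod.snd hle))

theorem malcev_subset_localGroupOver {V : Set FinSgp} {α F : Type} [Semigroup F]
    (ψ : FreeSemigroup α →ₙ* F)
    (hψ : ∀ T ∈ V, ∀ φ : FreeSemigroup α →ₙ* T.carrier, ∀ w w', ψ w = ψ w' → φ w = φ w') :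
    Malcev LG V ⊆ localGroupOver ψ := by
  refine Set.sInter_subset_of_mem ⟨isPseudovariety_localGroupOver ψ, ?_⟩
  rintro M ⟨T, f, hT, hLG⟩ φ w u hw hu hφw hφu hle
  have he : f (φ w) * f (φ w) = f (φ w) := by rw [← map_mul, hφw]
  have hfu : f (φ u) = f (φ w) := hψ T hT (f.comp φ) u w hu
  have := (mem_LG_iff _).1 (hLG (f (φ w)) he) ⟨φ w, rfl⟩ ⟨φ u, hfu⟩
    (Subtype.ext hφw) (Subtype.ext hφu) (Subtype.ext hle)
  exact congrArg Subtype.val this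

theorem finManyRegJ_of_isProV_malcev {S : Type} [Semigroup S] [TopologicalSpace S]
    {A : Set S} (hA : A.Finite) (hgen : TopGen S A) {V : Set FinSgp} (hV : IsPseudovariety V)
    (hlf : PVLocallyFinite V) (hS : IsProV (Malcev LG V) S) : FinManyRegJ S := by
  obtain ⟨⟨_, _, _, _⟩, hsep⟩ := hS
  have : Finite A := hA
  obtain ⟨F, _, _, ψ, hψ⟩ := exists_finite_relativelyFree (α := A) hV hlf
  let ρ : FreeSemigroup A →ₙ* S := FreeSemigroup.lift Subtype.val
  let C : F → Set S := fun r => closure (ρ '' (ψ ⁻¹' {r}))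
  have hCmul : ∀ {r r' : F} {x y : S}, x ∈ C r → y ∈ C r' → x * y ∈ C (r * r') := by
    intro r r' x y hx hy
    refine map_mem_closure₂ continuous_mul hx hy ?_
    rintro _ ⟨w, hw, rfl⟩ _ ⟨w', hw', rfl⟩
    rw [Set.mem_preimage, Set.mem_singleton_iff] at hw hw'
    exact ⟨w * w', by rw [Set.mem_preimage, map_mul, hw, hw']; rfl, map_mul _ _ _⟩
  have hCcover : ∀ x : S, ∃ r, x ∈ C r := by
    intro x
    have hx : x ∈ closure (⋃ r, ρ '' (ψ ⁻¹' {r})) := by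
      refine closure_mono ?_ (hgen.denseRange_lift x)
      rintro _ ⟨w, rfl⟩
      exact Set.mem_iUnion.2 ⟨ψ w, w, rfl, rfl⟩
    rw [closure_iUnion_of_finite] at hx
    exact Set.mem_iUnion.1 hx
  have hCidem : ∀ f : S, f * f = f → ∃ e, e * e = e ∧ f ∈ C e := by
    intro f hf
    obtain ⟨e, he, hee⟩ := exists_idempotent_mem_of_finite {r | f ∈ C r} (hCcover f)
      (fun r hr r' hr' => by
        have := hCmul hr hr'
        rwa [hf] at this)
    exact ⟨e, hee, he⟩
  have hCimage : ∀ (T : FinSgp) (π : S →ₙ* T.carrier), Continuous π → ∀ r, ∀ x ∈ C r,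
      ∃ w, ψ w = r ∧ π (ρ w) = π x := by
    intro T π hπ r x hx
    obtain ⟨_, hy, w, hw, rfl⟩ := mem_closure_iff.1 hx (π ⁻¹' {π x})
      ((isOpen_discrete {π x}).preimage hπ) rfl
    exact ⟨w, hw, hy⟩
  have hCJ : ∀ e : F, e * e = e → ∀ f ∈ C e, ∀ g ∈ C e, f * f = f → jLE f g := by
    intro e he f hf g hg hff
    have hCe : ∀ {x y : S}, x ∈ C e → y ∈ C e → x * y ∈ C e := fun hx hy => by
      have := hCmul hx hy
      rwa [he] at this
    obtain ⟨h, ⟨hhC, hfh, p, hp⟩, hhh⟩ := exists_idempotent_mem_of_isClosed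
      (C e ∩ ({x | f * x * f = x} ∩ Set.range fun p : S × S => p.1 * g * p.2))
      ⟨f * g * f, hCe (hCe hf hg) hf, by
        simp only [Set.mem_ofPred_eq, ← mul_assoc, hff]
        rw [mul_assoc _ f f, hff], (f, f), rfl⟩
      (isClosed_closure.inter ((isClosed_eq (by fun_prop) continuous_id).inter
        (isCompact_range (by fun_prop)).isClosed))
      (by
        rintro x ⟨hx, hx', p, rfl⟩ y ⟨hy, hy', -⟩
        refine ⟨hCe hx hy, ?_, (p.1, p.2 * y), by simp only [mul_assoc]⟩
        change f * (p.1 * g * p.2) * f = p.1 * g * p.2 at hx'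
        change f * y * f = y at hy'
        change f * (p.1 * g * p.2 * y) * f = p.1 * g * p.2 * y
        have h1 : f * (p.1 * g * p.2) = p.1 * g * p.2 := by
          rw [← hx']; simp only [← mul_assoc, hff]
        have h2 : y * f = y := by rw [← hy']; simp only [mul_assoc, hff]
        rw [← mul_assoc f, h1, mul_assoc, h2])
    have hhf : h = f := by
      by_contra hne
      obtain ⟨T, π, hT, hπ, -, hπne⟩ := hsep h f hne
      obtain ⟨w, hw, hwf⟩ := hCimage T π hπ e f hf
      obtain ⟨u, hu, huh⟩ := hCimage T π hπ e h hhC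
      refine hπne ?_
      rw [← hwf, ← huh]
      refine malcev_subset_localGroupOver ψ hψ hT (π.comp ρ) w u (by rw [hw, he])
        (hu.trans hw.symm) ?_ ?_ ?_
      all_goals simp only [MulHom.comp_apply, hwf, huh, ← map_mul]
      · rw [hff]
      · rw [hhh]
      · rw [hfh]
    exact Or.inr (Or.inr (Or.inr ⟨p.1, p.2, by rw [← hhf]; exact hp.symm⟩))
  have hrep : ∀ e : F, ∃ t : Set S, t.Finite ∧ (e * e = e → ∀ f ∈ C e, f * f = f →
      ∃ g ∈ t, GreenJ f g) := by
    intro e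
    by_cases h : ∃ g ∈ C e, g * g = g
    · obtain ⟨g, hg, hgg⟩ := h
      exact ⟨{g}, Set.finite_singleton g, fun he f hf hff =>
        ⟨g, rfl, hCJ e he f hf g hg hff, hCJ e he g hg f hf hgg⟩⟩
    · exact ⟨∅, Set.finite_empty, fun _ f hf hff => (h ⟨f, hf, hff⟩).elim⟩
  choose t ht htJ using hrep
  refine ⟨⋃ e, t e, Set.finite_iUnion ht, fun s hs => ?_⟩
  obtain ⟨f, hff, hsf, hfs⟩ := exists_idempotent_greenJ hs
  obtain ⟨e, he, hfe⟩ := hCidem f hff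
  obtain ⟨g, hg, hfg, hgf⟩ := htJ e he f hfe hff
  exact ⟨g, Set.mem_iUnion.2 ⟨e, hg⟩, hsf.trans hfg, hgf.trans hfs⟩

/-- A finitely generated profinite semigroup has finitely many regular
`J`-classes iff it is pro-(LG ⓜ V) for some locally finite pseudovariety `V`. -/
theorem finManyRegJ_iff_proLGMalcev
    (S : Type) [Semigroup S] [TopologicalSpace S] (hS : IsProfiniteSgp S)
    (A : Set S) (hA : A.Finite) (hgen : TopGen S A) :
    FinManyRegJ S ↔
      ∃ V : Set FinSgp, IsPseudovariety V ∧ PVLocallyFinite V ∧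
        IsProV (Malcev LG V) S := by
  refine ⟨exists_isProV_malcev_of_finManyRegJ hS, ?_⟩
  rintro ⟨V, hV, hlf, hpro⟩
  exact finManyRegJ_of_isProV_malcev hA hgen hV hlf hpro
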